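/- arXiv:1308.3956 — 7 statements merged into one kernel-verified Lean document; each statement's English description precedes it below -/
import Mathlib

section
/- Let r > 0 and let b ≥ 1 be an integer with √5 ≤ b·r (equivalently, the side length 1/b of the subsquares satisfies √5·(1/b) ≤ r). Partition the unit square [0,1]² into the b² closed squares Q_{i,j} = [i/b, (i+1)/b] × [j/b, (j+1)/b], 0 ≤ i, j ≤ b−1. If S ⊆ [0,1]² is a finite nonempty set of points such that every square Q_{i,j} contains at least one point of S, then the geometric graph on S with radius r (vertices the points of S, edge between distinct p, q ∈ S iff ‖p − q‖₂ ≤ r) is connected. -/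
/-- let `r > 0` and `b ≥ 1` with `√5 ≤ b·r` (i.e. `√5·(1/b) ≤ r`).  Partition
the unit square into the `b²` closed squares `[i/b,(i+1)/b] × [j/b,(j+1)/b]`.  If `S` is a
finite nonempty set of points of the unit square such that every such square contains a point
of `S`, then the geometric graph on `S` with radius `r` (edge between distinct `p, q ∈ S` iff
`‖p − q‖₂ ≤ r`) is connected. -/
theorem stmt_6 (r : ℝ) (hr : 0 < r) (b : ℕ) (hb : 1 ≤ b) (hbr : Real.sqrt 5 ≤ (b : ℝ) * r)
    (S : Finset (EuclideanSpace ℝ (Fin 2)))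
    (hS : ∀ p ∈ S, ∀ i : Fin 2, p i ∈ Set.Icc (0 : ℝ) 1)
    (hne : S.Nonempty)
    (hocc : ∀ i j : Fin b, ∃ p ∈ S,
      p 0 ∈ Set.Icc ((i : ℝ) / b) (((i : ℝ) + 1) / b) ∧
      p 1 ∈ Set.Icc ((j : ℝ) / b) (((j : ℝ) + 1) / b)) :
    (SimpleGraph.fromRel
      fun u v : {p : EuclideanSpace ℝ (Fin 2) // p ∈ S} =>
        ‖(u : EuclideanSpace ℝ (Fin 2)) - (v : EuclideanSpace ℝ (Fin 2))‖ ≤ r).Connected := by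
  have hb0 : (0 : ℝ) < b := by exact_mod_cast hb
  set G := SimpleGraph.fromRel
      fun u v : {p : EuclideanSpace ℝ (Fin 2) // p ∈ S} =>
        ‖(u : EuclideanSpace ℝ (Fin 2)) - (v : EuclideanSpace ℝ (Fin 2))‖ ≤ r with hG
  have h5 : (5 : ℝ) ≤ (b * r) ^ 2 := by
    have h := Real.sq_sqrt (show (0 : ℝ) ≤ 5 by norm_num)
    have h' := Real.sqrt_nonneg 5
    nlinarith
  -- scaled distance bound gives reachability
  have key : ∀ u v : {p : EuclideanSpace ℝ (Fin 2) // p ∈ S},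
      ((b : ℝ) * u.1 0 - b * v.1 0) ^ 2 + ((b : ℝ) * u.1 1 - b * v.1 1) ^ 2 ≤ 5 →
      G.Reachable u v := by
    intro u v h
    by_cases huv : u = v
    · rw [huv]
    · apply SimpleGraph.Adj.reachable
      rw [hG, SimpleGraph.fromRel_adj]
      refine ⟨huv, Or.inl ?_⟩
      rw [EuclideanSpace.norm_eq]
      apply Real.sqrt_le_iff.mpr
      refine ⟨hr.le, ?_⟩
      simp only [Fin.sum_univ_two, Real.norm_eq_abs, sq_abs, PiLp.sub_apply]
      have hb2 : (0 : ℝ) < (b : ℝ) ^ 2 := by positivity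
      refine le_of_mul_le_mul_left ?_ hb2
      nlinarith
  -- occupied squares, scaled
  have hocc2 : ∀ i j : ℕ, ∃ u : {p : EuclideanSpace ℝ (Fin 2) // p ∈ S}, i < b → j < b →
      ((i : ℝ) ≤ b * u.1 0 ∧ b * u.1 0 ≤ i + 1) ∧ ((j : ℝ) ≤ b * u.1 1 ∧ b * u.1 1 ≤ j + 1) := by
    intro i j
    by_cases h : i < b ∧ j < b
    · obtain ⟨p, hp, ⟨h1, h2⟩, h3, h4⟩ := hocc ⟨i, h.1⟩ ⟨j, h.2⟩
      refine ⟨⟨p, hp⟩, fun _ _ => ?_⟩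
      rw [div_le_iff₀ hb0] at h1 h3
      rw [le_div_iff₀ hb0] at h2 h4
      simp only [mul_comm (b : ℝ)]
      exact ⟨⟨h1, h2⟩, h3, h4⟩
    · obtain ⟨p, hp⟩ := hne
      exact ⟨⟨p, hp⟩, fun h1 h2 => absurd ⟨h1, h2⟩ h⟩
  choose c hc using hocc2
  have hrow : ∀ i : ℕ, i < b → G.Reachable (c 0 0) (c i 0) := by
    intro i
    induction i with
    | zero => intro _; exact SimpleGraph.Reachable.refl _
    | succ k ih =>
      intro hk
      refine (ih (by omega)).trans (key _ _ ?_)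
      obtain ⟨⟨a1, a2⟩, a3, a4⟩ := hc k 0 (by omega) hb
      obtain ⟨⟨b1, b2⟩, b3, b4⟩ := hc (k + 1) 0 hk hb
      push_cast at *
      nlinarith
  have hall : ∀ i : ℕ, i < b → ∀ j : ℕ, j < b → G.Reachable (c 0 0) (c i j) := by
    intro i hi j
    induction j with
    | zero => intro _; exact hrow i hi
    | succ k ih =>
      intro hk
      refine (ih (by omega)).trans (key _ _ ?_)
      obtain ⟨⟨a1, a2⟩, a3, a4⟩ := hc i k hi (by omega)
      obtain ⟨⟨b1, b2⟩, b3, b4⟩ := hc i (k + 1) hi hk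
      push_cast at *
      nlinarith
  -- each coordinate lies in some interval
  have hcell : ∀ x : ℝ, 0 ≤ x → x ≤ 1 → ∃ i : ℕ, i < b ∧ (i : ℝ) ≤ b * x ∧ b * x ≤ i + 1 := by
    intro x h0 h1
    by_cases h : x = 1
    · refine ⟨b - 1, by omega, ?_⟩
      rw [Nat.cast_sub hb, h]
      constructor <;> simp
    · have hx : x < 1 := lt_of_le_of_ne h1 h
      have hn : 0 ≤ (b : ℝ) * x := by positivity
      refine ⟨⌊(b : ℝ) * x⌋₊, ?_, Nat.floor_le hn, (Nat.lt_floor_add_one _).le⟩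
      rw [Nat.floor_lt hn]
      nlinarith
  have hfin : ∀ u, G.Reachable (c 0 0) u := by
    intro u
    obtain ⟨i, hi, h1, h2⟩ := hcell (u.1 0) (hS u.1 u.2 0).1 (hS u.1 u.2 0).2
    obtain ⟨j, hj, h3, h4⟩ := hcell (u.1 1) (hS u.1 u.2 1).1 (hS u.1 u.2 1).2
    refine (hall i hi j hj).trans (key _ _ ?_)
    obtain ⟨⟨a1, a2⟩, a3, a4⟩ := hc i j hi hj
    nlinarith
  haveI : Nonempty {p : EuclideanSpace ℝ (Fin 2) // p ∈ S} := ⟨c 0 0⟩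
  exact SimpleGraph.Connected.mk fun u v => (hfin u).symm.trans (hfin v)
end

section
/- Fix a real number c. For r with 0 < r < √2, set b(r) := ⌈√5 / r⌉. Then for every ε > 0 there exists δ > 0 such that for all r ∈ (0, δ) and all integers n with n ≥ (2·log b(r) + c) · b(r)², the geometric graph with radius r on n independent uniformly distributed random points in the unit square [0,1]² is connected with probability at least exp(−e^{−c}) − ε. -/
open MeasureTheory

/-- The closed unit square `[0,1]² ⊂ ℝ²` (with the Euclidean norm). -/
def unitSquare : Set (EuclideanSpace ℝ (Fin 2)) :=
  {p | ∀ i, p i ∈ Set.Icc (0 : ℝ) 1}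

/-- The uniform probability measure on the unit square. -/
noncomputable def unifSquare : Measure (EuclideanSpace ℝ (Fin 2)) :=
  volume.restrict unitSquare

/-- The geometric graph on the points `x 0, …, x (n-1)` with radius `r`: vertices `Fin n`,
with an edge between distinct `i` and `j` iff `‖x i − x j‖₂ ≤ r`. -/
def geomGraph {n : ℕ} (x : Fin n → EuclideanSpace ℝ (Fin 2)) (r : ℝ) : SimpleGraph (Fin n) :=
  SimpleGraph.fromRel fun i j => ‖x i - x j‖ ≤ r

section Coupon
open Filter Topology
lemma surj_card (α : Type) [Fintype α] [DecidableEq α] (n : ℕ) :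
    ((Finset.univ.filter (fun f : Fin n → α => Function.Surjective f)).card : ℝ) =
    ∑ k ∈ Finset.range (Fintype.card α + 1),
      (-1 : ℝ)^k * (Fintype.card α).choose k * ((Fintype.card α : ℝ) - k)^n := by
  have h := Finset.inclusion_exclusion_card_inf_compl (Finset.univ : Finset α)
    (fun a => Finset.univ.filter (fun f : Fin n → α => ∀ i, f i ≠ a))
  have e1 : (Finset.univ.inf fun a => (Finset.univ.filter (fun f : Fin n → α => ∀ i, f i ≠ a))ᶜ)
      = Finset.univ.filter (fun f : Fin n → α => Function.Surjective f) := by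
    ext f
    rw [Finset.mem_filter]
    simp [Finset.mem_inf]
    exact Iff.rfl
  have e2 : ∀ t : Finset α, (t.inf fun a => (Finset.univ.filter (fun f : Fin n → α => ∀ i, f i ≠ a)))
      = Fintype.piFinset (fun _ => tᶜ) := by
    intro t
    ext f
    simp only [Finset.mem_inf, Finset.mem_filter, Finset.mem_univ, true_and, Fintype.mem_piFinset,
      Finset.mem_compl]
    constructor
    · intro h i hi
      exact h _ hi i rfl
    · intro h a ha i hi
      exact h i (hi ▸ ha)
  rw [e1] at h
  simp only [e2, Fintype.card_piFinset_const, Finset.card_compl] at h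
  have h' := congrArg (fun z : ℤ => (z : ℝ)) h
  push_cast at h'
  rw [h', Finset.sum_powerset_apply_card (fun k => (-1:ℝ)^k * ((Fintype.card α - k : ℕ) : ℝ)^n)]
  apply Finset.sum_congr (by simp)
  intro k hk
  have : k ≤ Fintype.card α := by
    have := Finset.mem_range.1 hk
    omega
  rw [Nat.cast_sub this]
  simp
  ring

lemma surj_mono (α : Type) [Fintype α] [DecidableEq α] (n : ℕ) :
    Fintype.card α * (Finset.univ.filter (fun f : Fin n → α => Function.Surjective f)).card ≤
    (Finset.univ.filter (fun f : Fin (n+1) → α => Function.Surjective f)).card := by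
  rw [← Finset.card_univ, ← Finset.card_product]
  apply Finset.card_le_card_of_injOn (fun p => (Fin.cons p.1 p.2 : Fin (n+1) → α))
  · intro p hp
    simp only [Finset.coe_product, Set.mem_prod, Finset.mem_coe, Finset.mem_filter, Finset.mem_univ, true_and] at hp ⊢
    intro a
    obtain ⟨i, hi⟩ := hp a
    exact ⟨i.succ, by simpa using hi⟩
  · rintro ⟨a, f⟩ _ ⟨b, g⟩ _ h
    have := Fin.cons_inj.1 h
    exact Prod.ext this.1 this.2

lemma surj_ratio_mono (α : Type) [Fintype α] [DecidableEq α] [Nonempty α] :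
    Monotone (fun n : ℕ => ((Finset.univ.filter (fun f : Fin n → α => Function.Surjective f)).card : ℝ)
      / (Fintype.card α : ℝ)^n) := by
  apply monotone_nat_of_le_succ
  intro n
  have h : (0:ℝ) < Fintype.card α := by exact_mod_cast Fintype.card_pos
  rw [div_le_div_iff₀ (by positivity) (by positivity), pow_succ]
  have := surj_mono α n
  have : (Fintype.card α : ℝ) * ((Finset.univ.filter (fun f : Fin n → α => Function.Surjective f)).card : ℝ) ≤
    (Finset.univ.filter (fun f : Fin (n+1) → α => Function.Surjective f)).card := by exact_mod_cast this
  nlinarith [pow_pos h n]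

noncomputable def cc (c : ℝ) (m : ℕ) : ℕ := ⌈(Real.log m + c) * m⌉₊
noncomputable def tt (c : ℝ) (m k : ℕ) : ℝ := (-1 : ℝ)^k * m.choose k * (((m : ℝ) - k) / m)^(cc c m)

lemma ub (c : ℝ) (m k : ℕ) (hm : 0 < m) (hk : k ≤ m) :
    (m:ℝ)^k * (((m : ℝ) - k) / m)^(cc c m) ≤ Real.exp (-c) ^ k := by
  have hm' : (0:ℝ) < m := by exact_mod_cast hm
  have hk' : (k:ℝ) ≤ m := by exact_mod_cast hk
  have h1 : ((m : ℝ) - k) / m ≤ Real.exp (-(k/m)) := by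
    have := Real.add_one_le_exp (-((k:ℝ)/m))
    have e : ((m : ℝ) - k) / m = -((k:ℝ)/m) + 1 := by field_simp; ring
    linarith
  have h0 : 0 ≤ ((m : ℝ) - k) / m := div_nonneg (by linarith) hm'.le
  have h2 := pow_le_pow_left₀ h0 h1 (cc c m)
  have h3 : Real.exp (-((k:ℝ)/m)) ^ (cc c m) ≤ Real.exp (-(k * (Real.log m + c))) := by
    rw [← Real.exp_nat_mul]
    apply Real.exp_le_exp.2
    have : (Real.log m + c) * m ≤ cc c m := Nat.le_ceil _
    have h5 : k * (Real.log m + c) = (Real.log m + c) * m * (k/m) := by field_simp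
    rw [h5, mul_neg]
    apply neg_le_neg
    apply mul_le_mul_of_nonneg_right this (by positivity)
  calc _ ≤ (m:ℝ)^k * Real.exp (-(k * (Real.log m + c))) := by
        apply mul_le_mul_of_nonneg_left (h2.trans h3) (by positivity)
    _ = Real.exp (-c) ^ k := by
        nth_rw 1 [← Real.exp_log hm']
        rw [← Real.exp_nat_mul, ← Real.exp_nat_mul, ← Real.exp_add]
        congr 1; ring

lemma tt_bound (c : ℝ) (m k : ℕ) (hm : 0 < m) :
    ‖tt c m k‖ ≤ Real.exp (-c) ^ k / k.factorial := by
  unfold tt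
  rcases le_or_gt k m with hk | hk
  · have hm' : (0:ℝ) < m := by exact_mod_cast hm
    have hk' : (k:ℝ) ≤ m := by exact_mod_cast hk
    have h0 : 0 ≤ ((m : ℝ) - k) / m := div_nonneg (by linarith) hm'.le
    have := ub c m k hm hk
    have h2 := Nat.choose_le_pow_div (α := ℝ) k m
    rw [norm_mul, norm_mul, norm_pow, norm_neg, norm_one, one_pow, one_mul,
      Real.norm_of_nonneg (by positivity), Real.norm_of_nonneg (by positivity)]
    calc _ ≤ (m:ℝ)^k / k.factorial * (((m : ℝ) - k) / m)^(cc c m) := by gcongr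
      _ = ((m:ℝ)^k * (((m : ℝ) - k) / m)^(cc c m)) / k.factorial := by ring
      _ ≤ _ := by gcongr
  · rw [Nat.choose_eq_zero_of_lt hk]
    simp; positivity

lemma lb (c : ℝ) (m k : ℕ) (hk : k < m) (hpos : 0 ≤ Real.log m + c) :
    Real.exp (k * (-c - (k * (Real.log m + c) + 1) / (m - k)))
     ≤ (m:ℝ)^k * (((m : ℝ) - k) / m)^(cc c m) := by
  have hk' : (k:ℝ) < m := by exact_mod_cast hk
  have hd : (0:ℝ) < m - k := by linarith
  have hm' : (0:ℝ) < m := lt_of_le_of_lt (by positivity) hk'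
  have hn : (cc c m : ℝ) ≤ (Real.log m + c) * m + 1 := (Nat.ceil_lt_add_one (by positivity)).le
  have hl := Real.one_sub_inv_le_log_of_pos (div_pos hd hm')
  have e : 1 - (((m:ℝ) - k) / m)⁻¹ = -(k / (m-k)) := by field_simp; ring
  rw [e] at hl
  have hE : (m:ℝ)^k * (((m : ℝ) - k) / m)^(cc c m) =
     Real.exp (k * Real.log m + cc c m * Real.log (((m:ℝ) - k) / m)) := by
    rw [Real.exp_add, Real.exp_nat_mul, Real.exp_nat_mul, Real.exp_log hm', Real.exp_log (div_pos hd hm')]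
  rw [hE]
  apply Real.exp_le_exp.2
  have h1 : (cc c m : ℝ) * (-(k / (m-k))) ≤ cc c m * Real.log (((m:ℝ) - k) / m) := by gcongr
  have h2 : (cc c m : ℝ) * (k / (m-k)) ≤ ((Real.log m + c) * m + 1) * (k / (m-k)) := by gcongr
  have h3 : k * (-c - (k * (Real.log m + c) + 1) / (m - k)) = k * Real.log m - ((Real.log m + c) * m + 1) * (k / ((m:ℝ)-k)) := by
    field_simp; ring
  rw [h3]; linarith

lemma main_lim (c : ℝ) (k : ℕ) :
    Tendsto (fun m : ℕ => (m:ℝ)^k * (((m : ℝ) - k) / m)^(cc c m)) atTop (𝓝 (Real.exp (-c) ^ k)) := by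
  have hlog : Tendsto (fun m : ℕ => Real.log m) atTop atTop :=
    Real.tendsto_log_atTop.comp tendsto_natCast_atTop_atTop
  have hlm : Tendsto (fun m : ℕ => Real.log m / (m:ℝ)) atTop (𝓝 0) :=
    (Real.isLittleO_log_id_atTop.tendsto_div_nhds_zero).comp tendsto_natCast_atTop_atTop
  have hinv : Tendsto (fun m : ℕ => (1:ℝ) / (m:ℝ)) atTop (𝓝 0) := tendsto_one_div_atTop_nhds_zero_nat
  have h0 : Tendsto (fun m : ℕ => (k * (Real.log m + c) + 1) / ((m:ℝ) - k)) atTop (𝓝 0) := by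
    have a : Tendsto (fun m : ℕ => (k * (Real.log m / m + c * (1/m)) + 1/m) / ((1:ℝ) - k * (1/m))) atTop
       (𝓝 ((k * (0 + c * 0) + 0) / (1 - k * 0))) := by
      apply Tendsto.div
      · exact (((hlm.add (hinv.const_mul c)).const_mul _).add hinv)
      · exact tendsto_const_nhds.sub (hinv.const_mul _)
      · simp
    simp only [mul_zero, add_zero, zero_div] at a
    refine a.congr' ?_
    filter_upwards [eventually_gt_atTop k] with m hm
    have hk' : (k:ℝ) < m := by exact_mod_cast hm
    have hd : (m:ℝ) - k ≠ 0 := by linarith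
    have hm' : (m:ℝ) ≠ 0 := (lt_of_le_of_lt (by positivity) hk').ne'
    have : (1:ℝ) - k * (1/m) = (m - k)/m := by field_simp
    rw [this]
    field_simp
  have h1 : Tendsto (fun m : ℕ => Real.exp (k * (-c - (k * (Real.log m + c) + 1) / (m - k)))) atTop (𝓝 (Real.exp (-c) ^ k)) := by
    have := (Real.continuous_exp.tendsto _).comp ((h0.const_sub (-c)).const_mul (k:ℝ))
    rw [sub_zero, Real.exp_nat_mul] at this
    exact this
  refine tendsto_of_tendsto_of_tendsto_of_le_of_le' h1 tendsto_const_nhds ?_ ?_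
  · filter_upwards [eventually_gt_atTop k, hlog.eventually_ge_atTop (-c)] with m hm hc
    exact lb c m k hm (by linarith)
  · filter_upwards [eventually_gt_atTop k] with m hm
    exact ub c m k (by omega) hm.le

lemma choose_lim (k : ℕ) :
    Tendsto (fun m : ℕ => (m.choose k : ℝ) / (m:ℝ)^k) atTop (𝓝 (1 / k.factorial)) := by
  have hinv : Tendsto (fun m : ℕ => (1:ℝ) / (m:ℝ)) atTop (𝓝 0) := tendsto_one_div_atTop_nhds_zero_nat
  induction k with
  | zero => simp
  | succ k ih =>
    have h1 : Tendsto (fun m : ℕ => (m.choose k : ℝ) / (m:ℝ)^k * (1 - k * (1/m)) / (k+1)) atTop (𝓝 (1 / k.factorial * (1 - k * 0) / (k+1))) :=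
      (ih.mul (tendsto_const_nhds.sub (hinv.const_mul _))).div_const _
    have e : (1:ℝ) / k.factorial * (1 - k * 0) / (k+1) = 1 / (k+1).factorial := by
      rw [Nat.factorial_succ]; push_cast; field_simp; simp
    rw [e] at h1
    refine h1.congr' ?_
    filter_upwards [eventually_gt_atTop k] with m hm
    have hm' : (m:ℝ) ≠ 0 := by have : m ≠ 0 := by omega
                               exact_mod_cast this
    have := Nat.choose_succ_right_eq m k
    have h2 : (m.choose (k+1) : ℝ) * (k+1) = m.choose k * (m - k) := by
      rw [← Nat.cast_sub hm.le]; exact_mod_cast this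
    have h3 : (m.choose (k+1) : ℝ) = m.choose k * (m - k) / (k+1) := by
      rw [← h2]; field_simp
    rw [h3]; field_simp; ring

lemma tt_lim (c : ℝ) (k : ℕ) :
    Tendsto (fun m : ℕ => tt c m k) atTop (𝓝 ((-Real.exp (-c)) ^ k / k.factorial)) := by
  have h := ((choose_lim k).mul (main_lim c k)).const_mul ((-1:ℝ)^k)
  have e : (-1:ℝ)^k * (1 / k.factorial * Real.exp (-c) ^ k) = (-Real.exp (-c)) ^ k / k.factorial := by
    rw [neg_pow (Real.exp (-c))]; ring
  rw [e] at h
  refine h.congr' ?_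
  filter_upwards [eventually_gt_atTop 0] with m hm
  have hm' : (m:ℝ) ≠ 0 := by exact_mod_cast hm.ne'
  unfold tt
  field_simp

lemma coupon (c : ℝ) :
    Tendsto (fun m : ℕ => ∑ k ∈ Finset.range (m+1), tt c m k) atTop (𝓝 (Real.exp (-Real.exp (-c)))) := by
  have h := tendsto_tsum_of_dominated_convergence (f := fun m k => tt c m k) (𝓕 := atTop)
    (g := fun k : ℕ => (-Real.exp (-c)) ^ k / k.factorial)
    (bound := fun k : ℕ => Real.exp (-c) ^ k / k.factorial)
    (Real.summable_pow_div_factorial _) (fun k => tt_lim c k)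
    (by filter_upwards [eventually_gt_atTop 0] with m hm k using tt_bound c m k hm)
  have hx : Real.exp (-Real.exp (-c)) = ∑' k : ℕ, (-Real.exp (-c)) ^ k / k.factorial := by
    rw [Real.exp_eq_exp_ℝ, NormedSpace.exp_eq_tsum_div (𝔸 := ℝ)]
  rw [hx]
  convert h using 2 with m
  rw [tsum_eq_sum]
  intro k hk
  have : m < k := by simpa using hk
  simp [tt, Nat.choose_eq_zero_of_lt this]

lemma surj_ratio (α : Type) [Fintype α] [DecidableEq α] [Nonempty α] (c : ℝ) :
    ((Finset.univ.filter (fun f : Fin (cc c (Fintype.card α)) → α => Function.Surjective f)).card : ℝ)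
      / (Fintype.card α : ℝ)^(cc c (Fintype.card α)) = 
    ∑ k ∈ Finset.range (Fintype.card α+1), tt c (Fintype.card α) k := by
  rw [surj_card, Finset.sum_div]
  refine Finset.sum_congr rfl fun k _ => ?_
  rw [tt, div_pow]; ring

end Coupon

def gcell (b : ℕ) (q : Fin 2 → Fin b) : Set (EuclideanSpace ℝ (Fin 2)) :=
  {p | ∀ i, p i ∈ Set.Ico (((q i : ℕ) : ℝ) / b) (((q i : ℕ) + 1 : ℝ) / b)}

lemma gcell_preimage (b : ℕ) (q : Fin 2 → Fin b) :
    gcell b q = (WithLp.ofLp : EuclideanSpace ℝ (Fin 2) → (Fin 2 → ℝ)) ⁻¹'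
      (Set.univ.pi fun i => Set.Ico (((q i : ℕ) : ℝ) / b) (((q i : ℕ) + 1 : ℝ) / b)) := by
  ext p
  simp [gcell]

lemma gcell_meas (b : ℕ) (q : Fin 2 → Fin b) : MeasurableSet (gcell b q) := by
  rw [gcell_preimage]
  exact (PiLp.volume_preserving_ofLp (Fin 2)).measurable
    (MeasurableSet.univ_pi fun _ => measurableSet_Ico)

lemma gcell_vol (b : ℕ) (hb : 0 < b) (q : Fin 2 → Fin b) :
    unifSquare (gcell b q) = ENNReal.ofReal (1 / (b:ℝ)^2) := by
  have hb' : (0:ℝ) < b := by exact_mod_cast hb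
  have hsub : gcell b q ⊆ unitSquare := by
    intro p hp i
    have := hp i
    have hq : ((q i : ℕ) + 1 : ℝ) ≤ b := by exact_mod_cast (q i).2
    refine ⟨le_trans (by positivity) this.1, this.2.le.trans ?_⟩
    rw [div_le_one hb']; exact hq
  rw [unifSquare, Measure.restrict_apply (gcell_meas b q), Set.inter_eq_left.2 hsub, gcell_preimage,
    (PiLp.volume_preserving_ofLp (Fin 2)).measure_preimage
      (MeasurableSet.univ_pi fun _ => measurableSet_Ico).nullMeasurableSet,
    Real.volume_pi_Ico]
  rw [Fin.prod_univ_two, ← ENNReal.ofReal_mul]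
  · congr 1; field_simp; ring
  · rw [← sub_div]; simp

lemma gcell_disj (b : ℕ) (hb : 0 < b) (q q' : Fin 2 → Fin b) (p : EuclideanSpace ℝ (Fin 2))
    (h : p ∈ gcell b q) (h' : p ∈ gcell b q') : q = q' := by
  have hb' : (0:ℝ) < b := by exact_mod_cast hb
  funext i
  have h1 := h i
  have h2 := h' i
  have a := lt_of_le_of_lt h1.1 h2.2
  have a' := lt_of_le_of_lt h2.1 h1.2
  rw [div_lt_div_iff_of_pos_right hb'] at a a'
  have a1 : (q i : ℕ) < (q' i : ℕ) + 1 := by exact_mod_cast a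
  have a2 : (q' i : ℕ) < (q i : ℕ) + 1 := by exact_mod_cast a'
  apply Fin.ext
  omega

lemma gcell_dist (b : ℕ) (hb : 0 < b) (q q' : Fin 2 → Fin b) (p p' : EuclideanSpace ℝ (Fin 2))
    (h : p ∈ gcell b q) (h' : p' ∈ gcell b q') (r : ℝ) (hr0 : 0 < r) (hr : Real.sqrt 5 / r ≤ b)
    (hadj : ∃ i : Fin 2, (∀ j, j ≠ i → q j = q' j) ∧ ((q i : ℕ) = q' i ∨ (q i : ℕ) = q' i + 1)) :
    ‖p - p'‖ ≤ r := by
  have hb' : (0:ℝ) < b := by exact_mod_cast hb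
  rw [EuclideanSpace.norm_eq]
  have h5 : Real.sqrt 5 / b ≤ r := by
    rw [div_le_iff₀ hr0] at hr
    rw [div_le_iff₀ hb']; linarith
  refine le_trans ?_ h5
  have e : Real.sqrt 5 / b = Real.sqrt (5 / (b:ℝ)^2) := by
    rw [Real.sqrt_div (by norm_num), Real.sqrt_sq hb'.le]
  rw [e]
  apply Real.sqrt_le_sqrt
  rw [Fin.sum_univ_two]
  simp only [PiLp.sub_apply, Real.norm_eq_abs, sq_abs]
  have same : ∀ j, (q j : ℕ) = q' j → (p j - p' j)^2 ≤ 1 / (b:ℝ)^2 := by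
    intro j hj
    have h1 := h j
    have h2 := h' j
    rw [← hj] at h2
    have : |p j - p' j| ≤ 1 / b := by
      obtain ⟨u1, u2⟩ := h1
      obtain ⟨v1, v2⟩ := h2
      rw [add_div] at u2 v2
      rw [abs_le]; constructor <;> linarith
    rw [← sq_abs]
    calc _ ≤ (1 / (b:ℝ))^2 := by gcongr
      _ = _ := by rw [div_pow, one_pow]
  have adj : ∀ j, (q j : ℕ) = q' j + 1 → (p j - p' j)^2 ≤ 4 / (b:ℝ)^2 := by
    intro j hj
    have h1 := h j
    have h2 := h' j
    have hj' : ((q j : ℕ) : ℝ) = (q' j : ℕ) + 1 := by exact_mod_cast hj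
    rw [hj'] at h1
    have : |p j - p' j| ≤ 2 / b := by
      obtain ⟨u1, u2⟩ := h1
      obtain ⟨v1, v2⟩ := h2
      have : (2:ℝ) / b = 1 / b + 1 / b := by ring
      have : 0 < 1 / (b:ℝ) := by positivity
      simp only [add_div] at u1 u2 v2
      rw [abs_le]; constructor <;> linarith
    rw [← sq_abs]
    calc _ ≤ (2 / (b:ℝ))^2 := by gcongr
      _ = _ := by rw [div_pow]; norm_num
  have weak : ∀ j, ((q j : ℕ) = q' j ∨ (q j : ℕ) = q' j + 1) → (p j - p' j)^2 ≤ 4 / (b:ℝ)^2 := by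
    rintro j (hj | hj)
    · refine (same j hj).trans ?_
      gcongr; norm_num
    · exact adj j hj
  have e5 : (5:ℝ) / (b:ℝ)^2 = 4 / (b:ℝ)^2 + 1 / (b:ℝ)^2 := by ring
  obtain ⟨i, hi, hi'⟩ := hadj
  fin_cases i
  · have := weak 0 hi'
    have := same 1 (by rw [hi 1 (by decide)])
    linarith
  · have := weak 1 hi'
    have := same 0 (by rw [hi 0 (by decide)])
    linarith

lemma geom_conn (b n : ℕ) (hb : 0 < b) (f : Fin n → (Fin 2 → Fin b)) (hf : Function.Surjective f)
    (x : Fin n → EuclideanSpace ℝ (Fin 2)) (hx : ∀ i, x i ∈ gcell b (f i))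
    (r : ℝ) (hr0 : 0 < r) (hr : Real.sqrt 5 / r ≤ b) : (geomGraph x r).Connected := by
  have step : ∀ i j, (∃ l : Fin 2, (∀ k, k ≠ l → f i k = f j k) ∧
      ((f i l : ℕ) = f j l ∨ (f i l : ℕ) = f j l + 1)) → (geomGraph x r).Reachable i j := by
    intro i j h
    by_cases hij : i = j
    · rw [hij]
    · apply SimpleGraph.Adj.reachable
      rw [geomGraph, SimpleGraph.fromRel_adj]
      exact ⟨hij, Or.inl (gcell_dist b hb _ _ _ _ (hx i) (hx j) r hr0 hr h)⟩
  obtain ⟨i0, hi0⟩ := hf (fun _ => ⟨0, hb⟩)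
  have key : ∀ k : ℕ, ∀ i, (f i 0 : ℕ) + (f i 1 : ℕ) = k → (geomGraph x r).Reachable i i0 := by
    intro k
    induction k with
    | zero =>
      intro i hi
      apply step
      refine ⟨0, ?_, Or.inl ?_⟩
      · intro l hl
        rw [hi0]
        apply Fin.ext
        fin_cases l
        · exact absurd rfl hl
        · simp; omega
      · rw [hi0]; simp; omega
    | succ k ih =>
      intro i hi
      have : ∃ l : Fin 2, 0 < (f i l : ℕ) := by
        by_contra hcon
        push Not at hcon
        have := hcon 0
        have := hcon 1
        omega
      obtain ⟨l, hl⟩ := this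
      obtain ⟨j, hj⟩ := hf (Function.update (f i) l ⟨(f i l : ℕ) - 1, by have := (f i l).2; omega⟩)
      have hs : (geomGraph x r).Reachable i j := by
        apply step
        refine ⟨l, ?_, Or.inr ?_⟩
        · intro k hk
          rw [hj, Function.update_of_ne hk]
        · rw [hj, Function.update_self]; simp; omega
      refine hs.trans (ih j ?_)
      rw [hj]
      fin_cases l
      · simp at hl ⊢; omega
      · simp at hl ⊢; omega
  haveI : Nonempty (Fin n) := ⟨i0⟩
  exact ⟨fun i j => (key _ i rfl).trans (key _ j rfl).symm⟩

instance unifSquare_finite : IsFiniteMeasure unifSquare := by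
  have h : volume unitSquare = 1 := by
    have e : unitSquare = (WithLp.ofLp : EuclideanSpace ℝ (Fin 2) → (Fin 2 → ℝ)) ⁻¹'
      (Set.univ.pi fun _ => Set.Icc (0:ℝ) 1) := by
      ext p
      simp only [unitSquare, Set.mem_setOf_eq, Set.mem_preimage, Set.mem_univ_pi]
    rw [e, (PiLp.volume_preserving_ofLp (Fin 2)).measure_preimage
      (MeasurableSet.univ_pi fun _ => measurableSet_Icc).nullMeasurableSet, volume_pi_pi]
    simp
  refine ⟨?_⟩
  rw [unifSquare, Measure.restrict_apply_univ, h]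
  exact ENNReal.one_lt_top

lemma prob_lb (b n : ℕ) (hb : 0 < b) (r : ℝ) (hr0 : 0 < r) (hr : Real.sqrt 5 / r ≤ b) :
    ((Finset.univ.filter (fun f : Fin n → (Fin 2 → Fin b) => Function.Surjective f)).card : ℝ)
      / (Fintype.card (Fin 2 → Fin b) : ℝ)^n ≤
    ((Measure.pi fun _ : Fin n => unifSquare)
            {x : Fin n → EuclideanSpace ℝ (Fin 2) | (geomGraph x r).Connected}).toReal := by
  set S := Finset.univ.filter (fun f : Fin n → (Fin 2 → Fin b) => Function.Surjective f) with hS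
  have hsub : (⋃ f ∈ S, Set.univ.pi fun i => gcell b (f i)) ⊆
      {x : Fin n → EuclideanSpace ℝ (Fin 2) | (geomGraph x r).Connected} := by
    intro x hx
    simp only [Set.mem_iUnion, Set.mem_univ_pi] at hx
    obtain ⟨f, hf, hx⟩ := hx
    exact geom_conn b n hb f (Finset.mem_filter.1 hf).2 x hx r hr0 hr
  refine le_trans ?_ (ENNReal.toReal_mono (measure_ne_top _ _) (measure_mono hsub))
  rw [measure_biUnion_finset]
  · simp only [Measure.pi_pi, gcell_vol b hb]
    simp only [Finset.prod_const, Finset.sum_const, Finset.card_univ, Fintype.card_fin, nsmul_eq_mul]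
    rw [ENNReal.toReal_mul, ENNReal.toReal_pow, ENNReal.toReal_ofReal (by positivity)]
    simp [div_eq_mul_inv]
  · intro f _ g _ hfg
    rw [Function.onFun, Set.disjoint_left]
    intro x hx hx'
    apply hfg
    funext i
    exact gcell_disj b hb _ _ (x i) (hx i trivial) (hx' i trivial)
  · intro f _
    exact MeasurableSet.univ_pi fun i => gcell_meas b _

/-- fix `c : ℝ` and set `b(r) = ⌈√5/r⌉`.  For every `ε > 0` there is `δ > 0`
such that for all `0 < r < δ` and all integers `n ≥ (2·log b(r) + c)·b(r)²`, the geometric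
graph with radius `r` on `n` i.i.d. uniform points in the unit square is connected with
probability at least `exp(−e^{−c}) − ε`. -/
theorem stmt_7 (c : ℝ) (ε : ℝ) (hε : 0 < ε) :
    ∃ δ : ℝ, 0 < δ ∧ ∀ r : ℝ, 0 < r → r < δ →
      ∀ n : ℕ,
        (2 * Real.log (⌈Real.sqrt 5 / r⌉₊ : ℝ) + c) * (⌈Real.sqrt 5 / r⌉₊ : ℝ) ^ 2 ≤ (n : ℝ) →
        Real.exp (-Real.exp (-c)) - ε ≤
          ((Measure.pi fun _ : Fin n => unifSquare)
            {x : Fin n → EuclideanSpace ℝ (Fin 2) | (geomGraph x r).Connected}).toReal := by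
  have hev := (coupon c).eventually (lt_mem_nhds (show Real.exp (-Real.exp (-c)) - ε < _ by linarith))
  obtain ⟨M, hM⟩ := Filter.eventually_atTop.1 hev
  refine ⟨Real.sqrt 5 / (M + 1), by positivity, ?_⟩
  intro r hr0 hr n hn
  have hb1 : Real.sqrt 5 / r ≤ (⌈Real.sqrt 5 / r⌉₊ : ℝ) := Nat.le_ceil _
  generalize ⌈Real.sqrt 5 / r⌉₊ = b at hn hb1
  have hbM : (M : ℝ) + 1 ≤ b := by
    refine le_trans ?_ hb1
    rw [lt_div_iff₀ (by positivity)] at hr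
    rw [le_div_iff₀ hr0]; linarith
  have hbM' : M + 1 ≤ b := by exact_mod_cast hbM
  have hb : 0 < b := by omega
  refine le_trans ?_ (prob_lb b n hb r hr0 hb1)
  haveI : Nonempty (Fin b) := ⟨⟨0, hb⟩⟩
  have hcard : Fintype.card (Fin 2 → Fin b) = b ^ 2 := by simp
  have hcc : cc c (Fintype.card (Fin 2 → Fin b)) ≤ n := by
    rw [hcard]
    apply Nat.ceil_le.2
    push_cast
    rw [Real.log_pow]
    exact_mod_cast hn
  refine le_trans ?_ (surj_ratio_mono (Fin 2 → Fin b) hcc)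
  refine le_trans ?_ (surj_ratio (Fin 2 → Fin b) c).ge
  refine (hM _ ?_).le
  rw [hcard]
  nlinarith
end

section
/- Suppose n balls are tossed independently and uniformly at random into m bins, with 1 ≤ n ≤ m. Then the probability that at least one bin contains exactly one ball is at least (1 − 1/m)^{m−1}, which is strictly greater than e^{−1}. -/
/-- toss `n` balls uniformly and independently into `m` bins, `1 ≤ n ≤ m`
(modeled by the uniform distribution on `Fin n → Fin m`, so the probability of an event is the
ratio of the number of favorable outcomes to `m ^ n`).  The probability that at least one bin
contains exactly one ball is at least `(1 − 1/m)^(m−1)`, which is strictly greater than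
`e⁻¹` (for `m = 1` the convention `0^0 = 1` applies). -/
theorem stmt_8 (n m : ℕ) (hn : 1 ≤ n) (hnm : n ≤ m) :
    ((1 - 1 / (m : ℝ)) ^ (m - 1) ≤
      (Nat.card {f : Fin n → Fin m //
          ∃ b : Fin m, Nat.card {j : Fin n // f j = b} = 1} : ℝ) / (m : ℝ) ^ n) ∧
    Real.exp (-1) < (1 - 1 / (m : ℝ)) ^ (m - 1) := by
  obtain ⟨k, rfl⟩ : ∃ k, n = k + 1 := ⟨n - 1, by omega⟩
  obtain ⟨M, rfl⟩ : ∃ M, m = M + 1 := ⟨m - 1, by omega⟩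
  have hM : (0 : ℝ) < (M : ℝ) + 1 := by positivity
  have hbase : (1 - 1 / ((M + 1 : ℕ) : ℝ)) = (M : ℝ) / (M + 1) := by
    push_cast
    field_simp
    ring
  rw [hbase]
  simp only [Nat.add_sub_cancel]
  constructor
  · let F : Fin (M + 1) × (Fin k → Fin M) → {f : Fin (k + 1) → Fin (M + 1) //
          ∃ b : Fin (M + 1), Nat.card {j : Fin (k + 1) // f j = b} = 1} := fun p =>
      ⟨Fin.cons p.1 (fun i => p.1.succAbove (p.2 i)), p.1, by
        rw [Nat.card_eq_one_iff_unique]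
        refine ⟨⟨?_⟩, ⟨⟨0, by simp⟩⟩⟩
        have key : ∀ j : Fin (k + 1), (Fin.cons p.1 (fun i => p.1.succAbove (p.2 i)) :
            Fin (k + 1) → Fin (M + 1)) j = p.1 → j = 0 := by
          intro j
          refine Fin.cases ?_ (fun i => ?_) j
          · simp
          · intro h
            rw [Fin.cons_succ] at h
            exact absurd h (Fin.succAbove_ne _ _)
        rintro ⟨a, ha⟩ ⟨b, hb⟩
        exact Subtype.ext ((key a ha).trans (key b hb).symm)⟩
    have hF : Function.Injective F := by
      rintro ⟨b, g⟩ ⟨b', g'⟩ h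
      have h1 := congrArg Subtype.val h
      simp only [F] at h1
      obtain ⟨h2, h3⟩ := Fin.cons_inj.1 h1
      subst h2
      refine Prod.ext rfl (funext fun i => ?_)
      exact Fin.succAbove_right_injective (congrFun h3 i)
    have hc := Nat.card_le_card_of_injective F hF
    have hc1 : Nat.card (Fin (M + 1) × (Fin k → Fin M)) = (M + 1) * M ^ k := by
      simp
    rw [hc1] at hc
    have hc2 : ((M : ℝ) + 1) * (M : ℝ) ^ k ≤ (Nat.card {f : Fin (k + 1) → Fin (M + 1) //
          ∃ b : Fin (M + 1), Nat.card {j : Fin (k + 1) // f j = b} = 1} : ℝ) := by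
      exact_mod_cast hc
    calc ((M : ℝ) / (M + 1)) ^ M ≤ ((M : ℝ) / (M + 1)) ^ k := by
          apply pow_le_pow_of_le_one (by positivity) _ (by omega)
          rw [div_le_one hM]
          linarith
      _ = ((M : ℝ) + 1) * (M : ℝ) ^ k / ((M + 1 : ℕ) : ℝ) ^ (k + 1) := by
          push_cast
          rw [div_pow, pow_succ]
          field_simp
      _ ≤ _ := by gcongr
  · rcases Nat.eq_zero_or_pos M with rfl | hpos
    · simp
    · have hp : (0 : ℝ) < M := by exact_mod_cast hpos
      have h1 : 1 / (M : ℝ) + 1 < Real.exp (1 / M) := Real.add_one_lt_exp (by positivity)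
      have h2 : Real.exp (-(1 / (M : ℝ))) < (M : ℝ) / (M + 1) := by
        rw [Real.exp_neg, inv_lt_comm₀ (Real.exp_pos _) (by positivity), inv_div]
        have e : ((M : ℝ) + 1) / M = 1 / (M : ℝ) + 1 := by
          rw [add_div, div_self hp.ne', add_comm]
        rw [e]
        exact h1
      have h3 := pow_lt_pow_left₀ h2 (Real.exp_pos _).le hpos.ne'
      rw [← Real.exp_nat_mul] at h3
      have e : (M : ℝ) * -(1 / (M : ℝ)) = -1 := by
        rw [mul_neg, mul_one_div_cancel hp.ne']
      rw [e] at h3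
      exact h3
end

section
/- For every ε > 0 there exists M such that for every integer m > M and every integer n with m < n < m·log m, if n balls are tossed independently and uniformly at random into m bins, then the probability that at least one bin contains exactly one ball is at least (1 − e^{−e})·e^{−1} − ε. -/
namespace BallsAux

open Finset

/-- Second moment inequality, counting form. -/
lemma second_moment {α ι : Type*} [Fintype α] [DecidableEq α] [Fintype ι]
    (A : ι → Finset α) (S : Finset α) (hS : ∀ i, A i ⊆ S) :
    (∑ i, ((A i).card : ℝ)) ^ 2 ≤ (S.card : ℝ) * ∑ i, ∑ j, ((A i ∩ A j).card : ℝ) := by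
  classical
  have h1 : ∑ i, ((A i).card : ℝ) = ∑ f ∈ S, ∑ i, if f ∈ A i then (1 : ℝ) else 0 := by
    rw [Finset.sum_comm]
    refine Finset.sum_congr rfl fun i _ => ?_
    rw [← Finset.sum_filter, Finset.filter_mem_eq_inter, Finset.inter_eq_right.2 (hS i)]
    simp
  have h2 : ∑ i, ∑ j, ((A i ∩ A j).card : ℝ)
      = ∑ f ∈ S, (∑ i, if f ∈ A i then (1 : ℝ) else 0) ^ 2 := by
    have : ∀ f ∈ S, (∑ i, if f ∈ A i then (1 : ℝ) else 0) ^ 2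
        = ∑ i, ∑ j, if f ∈ A i ∩ A j then (1 : ℝ) else 0 := by
      intro f _
      rw [sq, Finset.sum_mul_sum]
      refine Finset.sum_congr rfl fun i _ => Finset.sum_congr rfl fun j _ => ?_
      by_cases h : f ∈ A i <;> by_cases h' : f ∈ A j <;> simp [h, h']
    rw [Finset.sum_congr rfl this, Finset.sum_comm (s := S)]
    refine Finset.sum_congr rfl fun i _ => ?_
    rw [Finset.sum_comm (s := S)]
    refine Finset.sum_congr rfl fun j _ => ?_
    rw [← Finset.sum_filter, Finset.filter_mem_eq_inter,
      Finset.inter_eq_right.2 (Finset.inter_subset_left.trans (hS i))]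
    simp
  rw [h1, h2]
  exact sq_sum_le_card_mul_sum_sq

/-- Outcomes where ball `p.2` is the only ball of bin `p.1`. -/
def alone {n m : ℕ} (p : Fin m × Fin n) : Finset (Fin n → Fin m) :=
  Fintype.piFinset fun i => if i = p.2 then {p.1} else {p.1}ᶜ

lemma card_alone {n m : ℕ} (p : Fin m × Fin n) :
    (alone p).card = (m - 1) ^ (n - 1) := by
  unfold alone
  rw [Fintype.card_piFinset, ← Finset.mul_prod_erase _ _ (Finset.mem_univ p.2)]
  rw [Finset.prod_congr rfl (g := fun _ => m - 1)]
  · simp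
  · intro i hi
    simp [Finset.ne_of_mem_erase hi, Finset.card_compl]

lemma mem_alone {n m : ℕ} (p : Fin m × Fin n) (f : Fin n → Fin m) :
    f ∈ alone p ↔ ∀ i, (i = p.2 ↔ f i = p.1) := by
  unfold alone
  rw [Fintype.mem_piFinset]
  refine forall_congr' fun i => ?_
  by_cases h : i = p.2 <;> simp [h]

lemma card_inter {n m : ℕ} (p q : Fin m × Fin n) (h1 : p.1 ≠ q.1) (h2 : p.2 ≠ q.2) :
    (alone p ∩ alone q).card ≤ (m - 2) ^ (n - 2) := by
  have hsub : alone p ∩ alone q ⊆ Fintype.piFinset fun i =>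
      if i = p.2 then {p.1} else if i = q.2 then {q.1} else ({p.1, q.1} : Finset (Fin m))ᶜ := by
    intro f hf
    rw [Finset.mem_inter, mem_alone, mem_alone] at hf
    rw [Fintype.mem_piFinset]
    intro i
    have ha := hf.1 i
    have hb := hf.2 i
    split_ifs with h h'
    · simpa using ha.1 h
    · simpa using hb.1 h'
    · simp only [Finset.mem_compl, Finset.mem_insert, Finset.mem_singleton, not_or]
      exact ⟨fun e => h (ha.2 e), fun e => h' (hb.2 e)⟩
  refine (Finset.card_le_card hsub).trans ?_
  rw [Fintype.card_piFinset, ← Finset.mul_prod_erase _ _ (Finset.mem_univ p.2),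
    ← Finset.mul_prod_erase (univ.erase p.2) _
      (Finset.mem_erase.2 ⟨h2.symm, Finset.mem_univ q.2⟩)]
  rw [Finset.prod_congr rfl (g := fun _ => m - 2)]
  · have hc : ((univ.erase p.2).erase q.2).card = n - 2 := by
      rw [Finset.card_erase_of_mem (Finset.mem_erase.2 ⟨h2.symm, Finset.mem_univ q.2⟩),
        Finset.card_erase_of_mem (Finset.mem_univ _)]
      simp; omega
    simp [h2.symm, hc]
  · intro i hi
    have a := Finset.ne_of_mem_erase hi
    have b := Finset.ne_of_mem_erase (Finset.mem_of_mem_erase hi)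
    simp only [a, b, if_false]
    rw [Finset.card_compl, Finset.card_pair h1, Fintype.card_fin]

lemma inter_bound {n m : ℕ} (p q : Fin m × Fin n) :
    ((alone p ∩ alone q).card : ℝ) ≤ (if p = q then (((m - 1) ^ (n - 1) : ℕ) : ℝ) else 0)
      + (if p.1 ≠ q.1 then (1 : ℝ) else 0) * (((m - 2) ^ (n - 2) : ℕ) : ℝ) := by
  by_cases h1 : p.1 = q.1
  · by_cases h : p = q
    · subst h
      simp [card_alone]
    · have : alone p ∩ alone q = ∅ := by
        ext f
        simp only [Finset.mem_inter, mem_alone, Finset.notMem_empty, iff_false, not_and]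
        intro ha hb
        apply h
        refine Prod.ext h1 ?_
        exact (hb p.2).2 (h1 ▸ (ha p.2).1 rfl)
      simp [this, h, h1]
  · have h : p ≠ q := fun e => h1 (e ▸ rfl)
    by_cases h2 : p.2 = q.2
    · have : alone p ∩ alone q = ∅ := by
        ext f
        simp only [Finset.mem_inter, mem_alone, Finset.notMem_empty, iff_false, not_and]
        intro ha hb
        apply h1
        rw [← (ha p.2).1 rfl, ← (hb q.2).1 rfl, h2]
      simp only [this, Finset.card_empty, Nat.cast_zero]
      positivity
    · have := card_inter p q h1 h2
      simp only [h, if_false, zero_add, ne_eq, h1, not_false_eq_true, if_true, one_mul]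
      exact_mod_cast this

lemma sum_inter {n m : ℕ} (hm : 1 ≤ m) :
    ∑ p : Fin m × Fin n, ∑ q : Fin m × Fin n, ((alone p ∩ alone q).card : ℝ) ≤
      (m : ℝ) * n * (((m - 1) ^ (n - 1) : ℕ) : ℝ)
        + m * (m - 1) * n ^ 2 * (((m - 2) ^ (n - 2) : ℕ) : ℝ) := by
  refine (Finset.sum_le_sum fun p _ => Finset.sum_le_sum fun q _ => inter_bound p q).trans ?_
  have key : ∀ p : Fin m × Fin n, ∑ q : Fin m × Fin n, (if p.1 ≠ q.1 then (1 : ℝ) else 0)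
      = ((m : ℝ) - 1) * n := by
    intro p
    rw [Fintype.sum_prod_type_right]
    have : ∑ b : Fin m, (if p.1 ≠ b then (1 : ℝ) else 0) = (m : ℝ) - 1 := by
      rw [← Finset.sum_filter, Finset.filter_ne]
      simp [Finset.card_erase_of_mem, Nat.cast_sub hm]
    simp only [this]
    simp
    ring
  simp only [Finset.sum_add_distrib, ← Finset.sum_mul, key]
  simp
  apply le_of_eq
  ring

lemma mean_bound (m n : ℕ) (hm : 1000 < m) (hmn : m < n)
    (hn : (n : ℝ) < (m : ℝ) * Real.log m) :
    2 * (m : ℝ) ^ n ≤ n * ((m : ℝ) - 1) ^ n := by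
  have hm' : (1000 : ℝ) < m := by exact_mod_cast hm
  have hmn' : (m : ℝ) < n := by exact_mod_cast hmn
  set k : ℝ := (m : ℝ) - 1 with hk
  have hk0 : 0 < k := by linarith
  have hmk : (m : ℝ) = k + 1 := by linarith
  have hlog6 : 6 ≤ Real.log m := by
    rw [Real.le_log_iff_exp_le (by linarith)]
    have : Real.exp 6 = (Real.exp 1 : ℝ) ^ (6 : ℕ) := by rw [← Real.exp_nat_mul]; norm_num
    rw [this]
    calc (Real.exp 1 : ℝ) ^ (6 : ℕ) ≤ (3 : ℝ) ^ (6 : ℕ) := by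
          gcongr; linarith [Real.exp_one_lt_d9]
      _ ≤ (m : ℝ) := by norm_num; linarith
  have hlogk : Real.log m ≤ k := Real.log_le_sub_one_of_pos (by linarith)
  set L := Real.log m with hL
  set y := (n : ℝ) / k with hy
  set z := (m : ℝ) * L / k with hz
  have hyk : (n : ℝ) = y * k := by rw [hy]; field_simp
  have hy1 : 1 ≤ y := by rw [hy, le_div_iff₀ hk0]; linarith
  have hyz : y ≤ z := by rw [hy, hz]; gcongr
  have hz2 : z = L + L / k := by rw [hz, hmk]; field_simp
  have hLk : L / k ≤ 1 := by rw [div_le_one hk0]; exact hlogk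
  have hmono : z ≤ y * Real.exp (z - y) := by
    have := Real.add_one_le_exp (z - y)
    nlinarith [Real.exp_pos (z - y)]
  have hzexp : Real.exp z ≤ m * 3 := by
    rw [hz2, Real.exp_add, hL, Real.exp_log (by linarith)]
    gcongr
    calc Real.exp (Real.log m / k) ≤ Real.exp 1 := Real.exp_le_exp.2 hLk
      _ ≤ 3 := by linarith [Real.exp_one_lt_d9]
  have hfin : 2 * Real.exp y ≤ n := by
    have e1 : Real.exp (z - y) * Real.exp y = Real.exp z := by
      rw [← Real.exp_add]; ring_nf
    have e2 : z * k = m * L := by rw [hz]; field_simp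
    have e3 : z * k * Real.exp y ≤ n * (m * 3) := by
      calc z * k * Real.exp y ≤ (y * Real.exp (z - y)) * k * Real.exp y := by gcongr
        _ = n * Real.exp z := by rw [hyk, ← e1]; ring
        _ ≤ n * (m * 3) := by gcongr
    rw [e2] at e3
    have e4 : (m : ℝ) * 6 * Real.exp y ≤ n * (m * 3) := le_trans (by gcongr) e3
    have : (m : ℝ) * 3 * (2 * Real.exp y) ≤ m * 3 * n := by linarith
    exact le_of_mul_le_mul_left this (by linarith)
  have hbase : (m : ℝ) ≤ k * Real.exp (1 / k) := by
    have := Real.add_one_le_exp (1 / k)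
    calc (m : ℝ) = k * (1 / k + 1) := by rw [hmk]; field_simp; ring
      _ ≤ _ := by gcongr
  calc 2 * (m : ℝ) ^ n ≤ 2 * (k * Real.exp (1 / k)) ^ n := by gcongr
    _ = (2 * Real.exp y) * k ^ n := by
        rw [mul_pow, ← Real.exp_nat_mul, hy, mul_one_div]; ring
    _ ≤ n * k ^ n := by gcongr

end BallsAux

open BallsAux in
/-- for every `ε > 0` there is `M` such that for all `m > M` and all `n` with
`m < n < m·log m`, when `n` balls are tossed uniformly and independently into `m` bins
(modeled by the uniform distribution on `Fin n → Fin m`, probabilities being ratios of counts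
of outcomes to `m ^ n`), the probability that at least one bin contains exactly one ball is at
least `(1 − e^{−e})·e^{−1} − ε`. -/
theorem stmt_10 (ε : ℝ) (hε : 0 < ε) :
    ∃ M : ℕ, ∀ m : ℕ, M < m → ∀ n : ℕ, m < n → (n : ℝ) < (m : ℝ) * Real.log m →
      (1 - Real.exp (-Real.exp 1)) * Real.exp (-1) - ε ≤
        (Nat.card {f : Fin n → Fin m //
            ∃ b : Fin m, Nat.card {j : Fin n // f j = b} = 1} : ℝ) / (m : ℝ) ^ n := by
  classical
  refine ⟨1000, fun m hm n hmn hn => ?_⟩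
  have hmean := mean_bound m n hm hmn hn
  set S : Finset (Fin n → Fin m) :=
    Finset.univ.filter fun f => ∃ b : Fin m, Nat.card {j : Fin n // f j = b} = 1 with hSdef
  have hcard : Nat.card {f : Fin n → Fin m //
            ∃ b : Fin m, Nat.card {j : Fin n // f j = b} = 1} = S.card := by
    rw [Nat.card_eq_fintype_card, Fintype.card_subtype]
  rw [hcard]
  have hS : ∀ p : Fin m × Fin n, alone p ⊆ S := by
    intro p f hf
    rw [mem_alone] at hf
    rw [hSdef, Finset.mem_filter]
    refine ⟨Finset.mem_univ _, p.1, ?_⟩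
    rw [Nat.card_eq_fintype_card, Fintype.card_eq_one_iff]
    exact ⟨⟨p.2, (hf _).1 rfl⟩, fun j => Subtype.ext ((hf j.1).2 j.2)⟩
  have hsm := second_moment (fun p : Fin m × Fin n => alone p) S hS
  have hsum := sum_inter (n := n) (m := m) (by omega)
  have hfirst : ∑ p : Fin m × Fin n, ((alone p).card : ℝ)
      = m * n * (((m - 1) ^ (n - 1) : ℕ) : ℝ) := by
    simp [card_alone]
  rw [hfirst] at hsm
  have hsm2 := hsm.trans (mul_le_mul_of_nonneg_left hsum (Nat.cast_nonneg _))
  obtain ⟨r, rfl⟩ : ∃ r, n = r + 2 := ⟨n - 2, by omega⟩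
  have hm' : (1000 : ℝ) < m := by exact_mod_cast hm
  rw [show r + 2 - 1 = r + 1 by omega, show r + 2 - 2 = r by omega] at hsm2
  rw [Nat.cast_pow, Nat.cast_pow, Nat.cast_sub (by omega), Nat.cast_sub (by omega)] at hsm2
  simp only [Nat.cast_one, Nat.cast_ofNat] at hsm2
  set s : ℝ := (S.card : ℝ) with hs
  have hs0 : 0 ≤ s := Nat.cast_nonneg _
  set x : ℝ := (m : ℝ) with hx
  set N : ℝ := ((r + 2 : ℕ) : ℝ) with hN
  have hN0 : 0 < N := by rw [hN]; positivity
  set N1 : ℝ := x * N * (x - 1) ^ (r + 1) with hN1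
  set T : ℝ := x ^ (r + 2) with hT
  have hT0 : 0 < T := by rw [hT]; apply pow_pos; linarith
  have hx1 : 0 < x - 1 := by linarith
  have hx0 : 0 < x := by linarith
  have hx2 : 0 < x - 2 := by linarith
  have hN1T : 2 * T ≤ N1 := by
    refine hmean.trans ?_
    rw [hN1, pow_succ (x - 1) (r + 1)]
    have : 0 ≤ N * (x - 1) ^ (r + 1) := by positivity
    nlinarith
  have hD : x * (x - 1) * N ^ 2 * (x - 2) ^ r * T ≤ 2 * N1 ^ 2 := by
    have a : (x - 2) ^ r * x ^ r ≤ ((x - 1) ^ 2) ^ r := by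
      rw [← mul_pow]
      apply pow_le_pow_left₀ (by positivity)
      nlinarith
    calc x * (x - 1) * N ^ 2 * (x - 2) ^ r * T
        = x ^ 3 * (x - 1) * N ^ 2 * ((x - 2) ^ r * x ^ r) := by rw [hT]; ring
      _ ≤ x ^ 3 * (x - 1) * N ^ 2 * ((x - 1) ^ 2) ^ r := by gcongr
      _ = x * (x ^ 2 * (x - 1) * N ^ 2 * ((x - 1) ^ 2) ^ r) := by ring
      _ ≤ (2 * (x - 1)) * (x ^ 2 * (x - 1) * N ^ 2 * ((x - 1) ^ 2) ^ r) := by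
          apply mul_le_mul_of_nonneg_right (by linarith) (by positivity)
      _ = 2 * N1 ^ 2 := by rw [hN1, ← pow_mul, mul_comm 2 r, pow_mul]; ring
  have hN10 : 0 < N1 := by linarith
  have hmain : N1 * T ≤ s * (T + 2 * N1) := by
    have h1 : N1 ^ 2 * T ≤ s * (N1 * T + 2 * N1 ^ 2) := by
      calc N1 ^ 2 * T ≤ s * (N1 + x * (x - 1) * N ^ 2 * (x - 2) ^ r) * T := by gcongr
        _ = s * (N1 * T + x * (x - 1) * N ^ 2 * (x - 2) ^ r * T) := by ring
        _ ≤ _ := by gcongr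
    have h2 : N1 * (N1 * T) ≤ N1 * (s * (T + 2 * N1)) := by linarith
    exact le_of_mul_le_mul_left h2 hN10
  have hprob : 2 / 5 ≤ s / T := by
    rw [le_div_iff₀ hT0]
    have h3 : s * (T + 2 * N1) ≤ s * (5 / 2 * N1) := by gcongr; linarith
    have h4 : N1 * T ≤ N1 * (5 / 2 * s) := by linarith
    have := le_of_mul_le_mul_left h4 hN10
    linarith
  have he : Real.exp (-1) ≤ 2 / 5 := by
    rw [Real.exp_neg, inv_le_comm₀ (Real.exp_pos _) (by norm_num)]
    have := Real.exp_one_gt_d9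
    norm_num
    linarith
  have hee := Real.exp_pos (-Real.exp 1)
  have hpos := Real.exp_pos (-1)
  nlinarith [mul_pos hee hpos]
end

section
/- Let x_1,…,x_n (robots) and y_1,…,y_n (targets) be 2n mutually independent uniformly distributed random points in the unit square Q = [0,1]² ⊂ ℝ². Fix r > 0 and ε with 0 < ε < 1, and set b := ⌈√2 / r⌉. If n ≥ b² · log( b² / ε ), then with probability at least 1 − ε every target is within distance r of some robot, i.e., for every j ∈ {1,…,n} there exists i ∈ {1,…,n} with ‖y_j − x_i‖₂ ≤ r. -/
open MeasureTheory

theorem vol_box (a c : Fin 2 → ℝ) :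
    volume {p : EuclideanSpace ℝ (Fin 2) | ∀ i, p i ∈ Set.Icc (a i) (c i)}
      = ∏ i, ENNReal.ofReal (c i - a i) := by
  rw [← Real.volume_Icc_pi,
    ← (EuclideanSpace.volume_preserving_symm_measurableEquiv_toLp (Fin 2)).measure_preimage
      measurableSet_Icc.nullMeasurableSet]
  congr 1
  ext p
  simp [Pi.le_def, forall_and]

theorem meas_box (a c : Fin 2 → ℝ) :
    MeasurableSet {p : EuclideanSpace ℝ (Fin 2) | ∀ i, p i ∈ Set.Icc (a i) (c i)} := by
  have : {p : EuclideanSpace ℝ (Fin 2) | ∀ i, p i ∈ Set.Icc (a i) (c i)}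
      = ⋂ i, (fun p : EuclideanSpace ℝ (Fin 2) => p i) ⁻¹' Set.Icc (a i) (c i) := by
    ext p; simp
  rw [this]
  refine MeasurableSet.iInter fun i => ?_
  exact (by fun_prop : Measurable fun p : EuclideanSpace ℝ (Fin 2) => p i) measurableSet_Icc

theorem meas_square : MeasurableSet unitSquare := meas_box (fun _ => 0) (fun _ => 1)

instance unif_prob : IsProbabilityMeasure unifSquare := by
  constructor
  rw [unifSquare, Measure.restrict_apply_univ]
  have := vol_box (fun _ => 0) (fun _ => 1)
  simpa [unitSquare] using this

/-- grid cell -/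
def gridCell (b : ℕ) (k : Fin 2 → Fin b) : Set (EuclideanSpace ℝ (Fin 2)) :=
  {p | ∀ i, p i ∈ Set.Icc ((k i : ℝ) / b) (((k i : ℝ) + 1) / b)}

theorem cell_measure (b : ℕ) (hb : 0 < b) (k : Fin 2 → Fin b) :
    unifSquare (gridCell b k)ᶜ = ENNReal.ofReal (1 - 1 / (b : ℝ) ^ 2) := by
  have hb' : (0 : ℝ) < b := by exact_mod_cast hb
  have hm : MeasurableSet (gridCell b k) := meas_box _ _
  have hsub : gridCell b k ⊆ unitSquare := by
    intro p hp i
    obtain ⟨h1, h2⟩ := hp i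
    have hk : ((k i : ℕ) : ℝ) + 1 ≤ b := by exact_mod_cast (k i).isLt
    exact ⟨le_trans (by positivity) h1, h2.trans ((div_le_one hb').2 hk)⟩
  rw [prob_compl_eq_one_sub hm, unifSquare, Measure.restrict_eq_self _ hsub]
  have hv := vol_box (fun i => (k i : ℝ) / b) (fun i => ((k i : ℝ) + 1) / b)
  have he : ∀ i, ((k i : ℝ) + 1) / b - (k i : ℝ) / b = 1 / b := fun i => by ring
  simp only [he, Finset.prod_const, Finset.card_univ, Fintype.card_fin] at hv
  rw [gridCell, hv, ← ENNReal.ofReal_pow (by positivity), ← ENNReal.ofReal_one,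
    ← ENNReal.ofReal_sub _ (by positivity), one_div_pow]

theorem exists_cell (b : ℕ) (hb : 0 < b) (p : EuclideanSpace ℝ (Fin 2)) (hp : p ∈ unitSquare) :
    ∃ k, p ∈ gridCell b k := by
  have hb' : (0 : ℝ) < b := by exact_mod_cast hb
  have : ∀ i, ∃ m : Fin b, p i ∈ Set.Icc ((m : ℝ) / b) (((m : ℝ) + 1) / b) := by
    intro i
    obtain ⟨h0, h1⟩ := hp i
    rcases eq_or_lt_of_le h1 with h | h
    · refine ⟨⟨b - 1, by omega⟩, ?_⟩
      have : ((b - 1 : ℕ) : ℝ) = b - 1 := by rw [Nat.cast_sub (by omega)]; simp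
      simp only [this, h]
      constructor
      · rw [div_le_one hb']; linarith
      · rw [le_div_iff₀ hb']; linarith
    · have hnn : 0 ≤ p i * b := by positivity
      refine ⟨⟨⌊p i * b⌋₊, ?_⟩, ?_⟩
      · rw [Nat.floor_lt hnn]; nlinarith
      · constructor
        · rw [div_le_iff₀ hb']; exact Nat.floor_le hnn
        · rw [le_div_iff₀ hb']; exact (Nat.lt_floor_add_one _).le
  choose k hk using this
  exact ⟨k, hk⟩

theorem cell_diam (b : ℕ) (hb : 0 < b) (k : Fin 2 → Fin b) (p q : EuclideanSpace ℝ (Fin 2))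
    (hp : p ∈ gridCell b k) (hq : q ∈ gridCell b k) : ‖p - q‖ ≤ Real.sqrt 2 / b := by
  have hb' : (0 : ℝ) < b := by exact_mod_cast hb
  have hd : ∀ i, (p i - q i) ^ 2 ≤ (1 / b : ℝ) ^ 2 := by
    intro i
    obtain ⟨h1, h2⟩ := hp i
    obtain ⟨h3, h4⟩ := hq i
    have he : ((k i : ℝ) + 1) / b = (k i : ℝ) / b + 1 / b := by ring
    rw [he] at h2 h4
    apply sq_le_sq'
    · linarith
    · linarith
  rw [EuclideanSpace.norm_eq]
  apply Real.sqrt_le_iff.2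
  refine ⟨by positivity, ?_⟩
  rw [div_pow, Real.sq_sqrt (by norm_num)]
  simp only [Fin.sum_univ_two, PiLp.sub_apply, Real.norm_eq_abs, sq_abs]
  have h0 := hd 0
  have h1 := hd 1
  have : (2 : ℝ) / b ^ 2 = (1 / b) ^ 2 + (1 / b) ^ 2 := by ring
  linarith

/-- let `x₁,…,x_n` (robots) and `y₁,…,y_n` (targets) be `2n` mutually
independent uniform points in the unit square (modeled by the product measure on pairs of
configurations `ω = (x, y)`).  For `r > 0`, `0 < ε < 1` and `b = ⌈√2/r⌉`, if
`n ≥ b²·log(b²/ε)` then with probability at least `1 − ε` every target is within distance `r`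
of some robot. -/
theorem stmt_12 (r ε : ℝ) (hr : 0 < r) (hε0 : 0 < ε) (hε1 : ε < 1) (n : ℕ)
    (hn : (⌈Real.sqrt 2 / r⌉₊ : ℝ) ^ 2 * Real.log ((⌈Real.sqrt 2 / r⌉₊ : ℝ) ^ 2 / ε) ≤ (n : ℝ)) :
    ENNReal.ofReal (1 - ε) ≤
      ((Measure.pi fun _ : Fin n => unifSquare).prod (Measure.pi fun _ : Fin n => unifSquare))
        {ω : (Fin n → EuclideanSpace ℝ (Fin 2)) × (Fin n → EuclideanSpace ℝ (Fin 2)) |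
          ∀ j : Fin n, ∃ i : Fin n, ‖ω.2 j - ω.1 i‖ ≤ r} := by
  set b := ⌈Real.sqrt 2 / r⌉₊ with hbdef
  have hb : 0 < b := Nat.ceil_pos.2 (by positivity)
  have hb' : (0 : ℝ) < b := by exact_mod_cast hb
  have hbr : Real.sqrt 2 / b ≤ r := by
    have := Nat.le_ceil (Real.sqrt 2 / r)
    rw [← hbdef, div_le_iff₀ hr] at this
    rw [div_le_iff₀ hb']; linarith
  set μ := Measure.pi fun _ : Fin n => unifSquare with hμ
  set S := {ω : (Fin n → EuclideanSpace ℝ (Fin 2)) × (Fin n → EuclideanSpace ℝ (Fin 2)) |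
          ∀ j : Fin n, ∃ i : Fin n, ‖ω.2 j - ω.1 i‖ ≤ r} with hS
  have hnum : (b : ℝ) ^ 2 * (1 - 1 / (b : ℝ) ^ 2) ^ n ≤ ε := by
    have hb1 : (1 : ℝ) ≤ b := by exact_mod_cast hb
    have h0 : (0 : ℝ) ≤ 1 - 1 / (b : ℝ) ^ 2 := by
      rw [sub_nonneg, div_le_one (by positivity)]; nlinarith
    have h1 : (1 - 1 / (b : ℝ) ^ 2) ≤ Real.exp (-(1 / (b : ℝ) ^ 2)) := by
      have := Real.add_one_le_exp (-(1 / (b : ℝ) ^ 2)); linarith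
    have h2 : (1 - 1 / (b : ℝ) ^ 2) ^ n ≤ Real.exp (-Real.log ((b : ℝ) ^ 2 / ε)) := by
      refine (pow_le_pow_left₀ h0 h1 n).trans ?_
      rw [← Real.exp_nat_mul, Real.exp_le_exp]
      have : Real.log ((b : ℝ) ^ 2 / ε) ≤ n / (b : ℝ) ^ 2 := by
        rw [le_div_iff₀ (by positivity)]; linarith
      calc _ = -((n : ℝ) / (b : ℝ) ^ 2) := by ring
        _ ≤ _ := by linarith
    rw [Real.exp_neg, Real.exp_log (by positivity), inv_div] at h2
    calc _ ≤ (b : ℝ) ^ 2 * (ε / (b : ℝ) ^ 2) := by gcongr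
      _ = ε := by field_simp
  have hsub : Sᶜ ⊆ (⋃ k : Fin 2 → Fin b, (Set.univ.pi fun _ : Fin n => (gridCell b k)ᶜ) ×ˢ Set.univ)
      ∪ (⋃ j : Fin n, Set.univ ×ˢ (Function.eval j ⁻¹' unitSquareᶜ)) := by
    intro ω hω
    by_contra hcon
    apply hω
    intro j
    simp only [Set.mem_union, not_or, Set.mem_iUnion, not_exists, Set.mem_prod, Set.mem_univ,
      and_true, true_and, Set.mem_preimage, Set.mem_compl_iff, not_not, Set.mem_pi, forall_true_left,
      Function.eval, not_forall] at hcon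
    obtain ⟨h1, h2⟩ := hcon
    obtain ⟨k, hk⟩ := exists_cell b hb _ (h2 j)
    obtain ⟨i, hi⟩ := h1 k
    exact ⟨i, (cell_diam b hb k _ _ hk hi).trans hbr⟩
  have hnull : unifSquare unitSquareᶜ = 0 := by
    rw [unifSquare, Measure.restrict_apply meas_square.compl]; simp
  have hbound : (μ.prod μ) Sᶜ ≤ ENNReal.ofReal ε := by
    refine (measure_mono hsub).trans ((measure_union_le _ _).trans ?_)
    have hz : (μ.prod μ) (⋃ j : Fin n, Set.univ ×ˢ (Function.eval j ⁻¹' unitSquareᶜ)) = 0 := by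
      rw [measure_iUnion_null_iff]
      intro j
      rw [Measure.prod_prod, hμ, Measure.pi_eval_preimage_null (fun _ : Fin n => unifSquare) hnull, mul_zero]
    rw [hz, add_zero]
    refine (measure_iUnion_fintype_le _ _).trans ?_
    have hc : ∀ k : Fin 2 → Fin b,
        (μ.prod μ) ((Set.univ.pi fun _ : Fin n => (gridCell b k)ᶜ) ×ˢ Set.univ)
          = ENNReal.ofReal (1 - 1 / (b : ℝ) ^ 2) ^ n := by
      intro k
      rw [Measure.prod_prod, measure_univ, mul_one, hμ, Measure.pi_pi]
      simp only [cell_measure b hb k, Finset.prod_const, Finset.card_univ, Fintype.card_fin]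
    have h0 : (0 : ℝ) ≤ 1 - 1 / (b : ℝ) ^ 2 := by
      have hb1 : (1 : ℝ) ≤ b := by exact_mod_cast hb
      rw [sub_nonneg, div_le_one (by positivity)]; nlinarith
    rw [Finset.sum_congr rfl fun k _ => hc k, Finset.sum_const, nsmul_eq_mul,
      ← ENNReal.ofReal_pow h0, ← ENNReal.ofReal_natCast, ← ENNReal.ofReal_mul (by positivity)]
    apply ENNReal.ofReal_le_ofReal
    simpa using hnum
  rw [ENNReal.ofReal_sub _ hε0.le, ENNReal.ofReal_one, tsub_le_iff_right]
  calc (1 : ENNReal) = (μ.prod μ) (S ∪ Sᶜ) := by rw [Set.union_compl_self, measure_univ]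
    _ ≤ (μ.prod μ) S + (μ.prod μ) Sᶜ := measure_union_le _ _
    _ ≤ _ := by gcongr
end

section
/- Let x_1,…,x_n be independent uniformly distributed random points in the unit square Q = [0,1]² ⊂ ℝ². Fix r > 0 and ε with 0 < ε < 1, and set b := ⌈√2 / r⌉. If n ≥ b² · log( b² / ε ), then with probability at least 1 − ε every point of the unit square is within distance r of some x_i, i.e., for every p ∈ [0,1]² there exists i ∈ {1,…,n} with ‖p − x_i‖₂ ≤ r. -/
open MeasureTheory

lemma aux_vol (a : Fin 2 → ℝ) (w : ℝ) :
    volume {p : EuclideanSpace ℝ (Fin 2) | ∀ i, p i ∈ Set.Icc (a i) (a i + w)}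
      = ENNReal.ofReal w ^ 2 := by
  have h := (PiLp.volume_preserving_ofLp (Fin 2)).measure_preimage
    (s := Set.pi Set.univ (fun i => Set.Icc (a i) (a i + w)))
    (MeasurableSet.univ_pi (fun i => measurableSet_Icc)).nullMeasurableSet
  have e : {p : EuclideanSpace ℝ (Fin 2) | ∀ i, p i ∈ Set.Icc (a i) (a i + w)} =
      (WithLp.ofLp) ⁻¹' (Set.pi Set.univ (fun i => Set.Icc (a i) (a i + w))) := by
    ext p; simp only [Set.mem_ofPred_eq, Set.mem_preimage, Set.mem_pi, Set.mem_univ, true_implies]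
  rw [e, h, volume_pi_pi]
  simp [Real.volume_Icc]

lemma aux_meas (a : Fin 2 → ℝ) (w : ℝ) :
    MeasurableSet {p : EuclideanSpace ℝ (Fin 2) | ∀ i, p i ∈ Set.Icc (a i) (a i + w)} := by
  have e : {p : EuclideanSpace ℝ (Fin 2) | ∀ i, p i ∈ Set.Icc (a i) (a i + w)} =
      ⋂ i, (fun p : EuclideanSpace ℝ (Fin 2) => p i) ⁻¹' (Set.Icc (a i) (a i + w)) := by
    ext p; simp
  rw [e]
  exact MeasurableSet.iInter fun i => measurableSet_Icc.preimage (by fun_prop)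

lemma aux_prob : IsProbabilityMeasure unifSquare := by
  constructor
  have h := aux_vol (fun _ => 0) 1
  have e : unitSquare = {p : EuclideanSpace ℝ (Fin 2) |
      ∀ i, p i ∈ Set.Icc ((fun _ => 0 : Fin 2 → ℝ) i) ((fun _ => 0 : Fin 2 → ℝ) i + 1)} := by
    ext p; simp [unitSquare]
  rw [unifSquare, Measure.restrict_apply_univ, e, h]
  simp

/-- The grid cell with index `c`. -/
def auxCell (b : ℕ) (c : Fin 2 → Fin b) : Set (EuclideanSpace ℝ (Fin 2)) :=
  {p | ∀ i, p i ∈ Set.Icc (((c i : ℕ) : ℝ) / b) (((c i : ℕ) : ℝ) / b + 1 / b)}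

lemma auxCell_meas (b : ℕ) (c : Fin 2 → Fin b) : MeasurableSet (auxCell b c) :=
  aux_meas (fun i => ((c i : ℕ) : ℝ) / b) (1 / b)

lemma auxCell_vol (b : ℕ) (c : Fin 2 → Fin b) (hb : 0 < b) :
    unifSquare (auxCell b c) = ENNReal.ofReal (1 / (b : ℝ) ^ 2) := by
  have hb' : (0 : ℝ) < b := by exact_mod_cast hb
  have hs : auxCell b c ⊆ unitSquare := by
    intro p hp i
    obtain ⟨h1, h2⟩ := hp i
    have h3 : (((c i : ℕ) : ℝ) + 1) ≤ b := by exact_mod_cast (c i).isLt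
    refine ⟨le_trans (by positivity) h1, h2.trans ?_⟩
    rw [← add_div, div_le_one hb']
    exact h3
  rw [unifSquare, Measure.restrict_apply (auxCell_meas b c), Set.inter_eq_left.2 hs]
  refine (aux_vol (fun i => ((c i : ℕ) : ℝ) / b) (1 / b)).trans ?_
  rw [← ENNReal.ofReal_pow (by positivity), div_pow, one_pow]

lemma aux_cover (b : ℕ) (hb : 0 < b) (p : EuclideanSpace ℝ (Fin 2)) (hp : p ∈ unitSquare) :
    ∃ c, p ∈ auxCell b c := by
  have hb' : (0 : ℝ) < b := by exact_mod_cast hb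
  have key : ∀ i, ∃ k : Fin b,
      p i ∈ Set.Icc (((k : ℕ) : ℝ) / b) (((k : ℕ) : ℝ) / b + 1 / b) := by
    intro i
    obtain ⟨h0, h1⟩ := hp i
    have hx0 : 0 ≤ p i * b := by positivity
    rcases h1.lt_or_eq with h | h
    · refine ⟨⟨⌊p i * b⌋₊, ?_⟩, ?_, ?_⟩
      · rw [Nat.floor_lt hx0]
        nlinarith
      · rw [div_le_iff₀ hb']
        exact Nat.floor_le hx0
      · rw [← add_div, le_div_iff₀ hb']
        exact (Nat.lt_floor_add_one _).le
    · refine ⟨⟨b - 1, by omega⟩, ?_, ?_⟩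
      · rw [div_le_iff₀ hb', h]
        push_cast [Nat.cast_sub hb]
        linarith
      · rw [← add_div, le_div_iff₀ hb', h]
        simp only
        rw [Nat.cast_sub (by omega : 1 ≤ b)]
        simp
  choose c hc using key
  exact ⟨c, hc⟩

lemma aux_dist (b : ℕ) (hb : 0 < b) (r : ℝ) (hr : 0 < r) (h : Real.sqrt 2 / r ≤ b)
    (c : Fin 2 → Fin b) (p q : EuclideanSpace ℝ (Fin 2)) (hp : p ∈ auxCell b c)
    (hq : q ∈ auxCell b c) : ‖p - q‖ ≤ r := by
  have hb' : (0 : ℝ) < b := by exact_mod_cast hb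
  have key : ∀ i, (p i - q i) ^ 2 ≤ (1 / (b : ℝ)) ^ 2 := by
    intro i
    obtain ⟨h1, h2⟩ := hp i
    obtain ⟨h3, h4⟩ := hq i
    apply sq_le_sq'
    · linarith
    · linarith
  have h2 : Real.sqrt 2 * (1 / b) ≤ r := by
    rw [div_le_iff₀ hr] at h
    rw [mul_one_div, div_le_iff₀ hb']
    linarith
  have h3 : (Real.sqrt 2 * (1 / b)) ^ 2 = 2 * (1 / (b : ℝ)) ^ 2 := by
    rw [mul_pow, Real.sq_sqrt (by norm_num)]
  rw [EuclideanSpace.norm_eq]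
  refine le_trans ?_ h2
  apply Real.sqrt_le_iff.2 ⟨by positivity, ?_⟩
  rw [h3, Fin.sum_univ_two]
  simp only [Real.norm_eq_abs, sq_abs, PiLp.sub_apply]
  linarith [key 0, key 1]

lemma aux_real (b n : ℕ) (hb : 0 < b) (ε : ℝ) (hε : 0 < ε)
    (hn : (b : ℝ) ^ 2 * Real.log ((b : ℝ) ^ 2 / ε) ≤ n) :
    (b : ℝ) ^ 2 * (1 - 1 / (b : ℝ) ^ 2) ^ n ≤ ε := by
  have hb' : (1 : ℝ) ≤ b := by exact_mod_cast hb
  have hB : (1 : ℝ) ≤ (b : ℝ) ^ 2 := one_le_pow₀ hb'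
  generalize (b : ℝ) ^ 2 = B at *
  have hB0 : 0 < B := by linarith
  have h1 : (1 - 1 / B) ^ n ≤ Real.exp (-(1 / B)) ^ n := by
    apply pow_le_pow_left₀
    · rw [sub_nonneg, div_le_one hB0]; exact hB
    · exact Real.one_sub_le_exp_neg _
  have h2 : Real.exp (-(1 / B)) ^ n ≤ ε / B := by
    rw [← Real.exp_nat_mul, ← Real.exp_log (show 0 < ε / B by positivity)]
    apply Real.exp_le_exp.2
    have : Real.log (ε / B) = - Real.log (B / ε) := by
      rw [← Real.log_inv, inv_div]
    rw [this, mul_neg, neg_le_neg_iff, mul_one_div, le_div_iff₀ hB0]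
    linarith
  calc B * (1 - 1 / B) ^ n ≤ B * (ε / B) := by gcongr; exact h1.trans h2
    _ = ε := by field_simp

/-- let `x₁,…,x_n` be `n` i.i.d. uniform points in the unit square.  For
`r > 0`, `0 < ε < 1` and `b = ⌈√2/r⌉`, if `n ≥ b²·log(b²/ε)` then with probability at least
`1 − ε` every point of the unit square is within distance `r` of some `x_i`. -/
theorem stmt_13 (r ε : ℝ) (hr : 0 < r) (hε0 : 0 < ε) (hε1 : ε < 1) (n : ℕ)
    (hn : (⌈Real.sqrt 2 / r⌉₊ : ℝ) ^ 2 * Real.log ((⌈Real.sqrt 2 / r⌉₊ : ℝ) ^ 2 / ε) ≤ (n : ℝ)) :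
    ENNReal.ofReal (1 - ε) ≤
      (Measure.pi fun _ : Fin n => unifSquare)
        {x : Fin n → EuclideanSpace ℝ (Fin 2) |
          ∀ p ∈ unitSquare, ∃ i : Fin n, ‖p - x i‖ ≤ r} := by
  set b := ⌈Real.sqrt 2 / r⌉₊ with hbdef
  have hb : 0 < b := Nat.ceil_pos.2 (by positivity)
  have hb1 : (1 : ℝ) ≤ (b : ℝ) := by exact_mod_cast hb
  have hle : Real.sqrt 2 / r ≤ b := Nat.le_ceil _
  have := aux_prob
  set μ := Measure.pi fun _ : Fin n => unifSquare with hμ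
  let B : (Fin 2 → Fin b) → Set (Fin n → EuclideanSpace ℝ (Fin 2)) :=
    fun c => Set.pi Set.univ fun _ => (auxCell b c)ᶜ
  have hBm : MeasurableSet (⋃ c, B c) := MeasurableSet.iUnion fun c =>
    MeasurableSet.univ_pi fun _ => (auxCell_meas b c).compl
  have hsub : (⋃ c, B c)ᶜ ⊆ {x : Fin n → EuclideanSpace ℝ (Fin 2) |
          ∀ p ∈ unitSquare, ∃ i : Fin n, ‖p - x i‖ ≤ r} := by
    intro x hx p hp
    obtain ⟨c, hc⟩ := aux_cover b hb p hp
    by_contra! hcon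
    apply hx
    refine Set.mem_iUnion.2 ⟨c, fun i _ hi => ?_⟩
    exact absurd (aux_dist b hb r hr hle c p (x i) hc hi) (not_le.2 (hcon i))
  have hnn : (0 : ℝ) ≤ 1 - 1 / (b : ℝ) ^ 2 := by
    rw [sub_nonneg]
    exact div_le_one_of_le₀ (one_le_pow₀ hb1) (by positivity)
  have hBc : ∀ c, μ (B c) = ENNReal.ofReal ((1 - 1 / (b : ℝ) ^ 2) ^ n) := by
    intro c
    rw [hμ, Measure.pi_pi, Finset.prod_const, Finset.card_univ, Fintype.card_fin,
      prob_compl_eq_one_sub (auxCell_meas b c), auxCell_vol b c hb, ENNReal.ofReal_pow hnn,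
      ENNReal.ofReal_sub _ (by positivity), ENNReal.ofReal_one]
  have hbad : μ (⋃ c, B c) ≤ ENNReal.ofReal ε := by
    calc μ (⋃ c, B c) ≤ ∑ c, μ (B c) := measure_iUnion_fintype_le _ _
      _ = ENNReal.ofReal ((b : ℝ) ^ 2 * (1 - 1 / (b : ℝ) ^ 2) ^ n) := by
        simp only [hBc, Finset.sum_const, Finset.card_univ, Fintype.card_fun, Fintype.card_fin,
          nsmul_eq_mul]
        rw [ENNReal.ofReal_mul (by positivity), ← Nat.cast_pow,
          ENNReal.ofReal_natCast]
      _ ≤ _ := ENNReal.ofReal_le_ofReal (aux_real b n hb ε hε0 hn)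
  calc ENNReal.ofReal (1 - ε) = 1 - ENNReal.ofReal ε := by
        rw [ENNReal.ofReal_sub _ hε0.le, ENNReal.ofReal_one]
    _ ≤ 1 - μ (⋃ c, B c) := tsub_le_tsub_left hbad _
    _ = μ (⋃ c, B c)ᶜ := (prob_compl_eq_one_sub hBm).symm
    _ ≤ _ := measure_mono hsub
end

section
/- Let x_1,…,x_n (robots) and y_1,…,y_n (targets) be 2n mutually independent uniformly distributed random points in the unit square [0,1]² ⊂ ℝ², and let q_1,…,q_m be pairwise disjoint measurable subsets of [0,1]², covering [0,1]², each of Lebesgue measure 1/m. For each i let A_i := #{ j : x_j ∈ q_i } and B_i := #{ j : y_j ∈ q_i }. Then the expected total number of robots left unmatched after matching robots one-to-one with targets within each region until no more matchings can be made satisfies E[ Σ_{i=1}^m max(A_i − B_i, 0) ] ≤ sqrt( n(m−1)/2 ). -/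
open MeasureTheory

open ProbabilityTheory in
lemma aux_pos_part {β : Type*} [MeasurableSpace β] (P : Measure β) [IsProbabilityMeasure P]
    (C : β → ℝ) (hC : MemLp C 2 P) :
    Integrable (fun z : β × β => max (C z.1 - C z.2) 0) (P.prod P) ∧
    ∫ z : β × β, max (C z.1 - C z.2) 0 ∂(P.prod P) ≤ Real.sqrt (2 * Var[C; P]) / 2 := by
  have h1 : MemLp (fun z : β × β => C z.1) 2 (P.prod P) :=
    hC.comp_measurePreserving measurePreserving_fst
  have h2 : MemLp (fun z : β × β => C z.2) 2 (P.prod P) :=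
    hC.comp_measurePreserving measurePreserving_snd
  have hD : MemLp (fun z : β × β => C z.1 - C z.2) 2 (P.prod P) := h1.sub h2
  have hDi : Integrable (fun z : β × β => C z.1 - C z.2) (P.prod P) :=
    hD.integrable (by norm_num)
  have hA : MemLp (fun z : β × β => |C z.1 - C z.2|) 2 (P.prod P) := hD.abs
  have hE : (fun z : β × β => max (C z.1 - C z.2) 0)
      = fun z => (|C z.1 - C z.2| + (C z.1 - C z.2)) / 2 := by
    funext z
    rcases le_total 0 (C z.1 - C z.2) with h | h
    · rw [max_eq_left h, abs_of_nonneg h]; ring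
    · rw [max_eq_right h, abs_of_nonpos h]; ring
  refine ⟨hDi.pos_part, ?_⟩
  have hm1 : ∫ z : β × β, C z.1 ∂(P.prod P) = ∫ x, C x ∂P := by
    rw [integral_fun_fst]; simp
  have hm2 : ∫ z : β × β, C z.2 ∂(P.prod P) = ∫ x, C x ∂P := by
    rw [integral_fun_snd]; simp
  have hD0 : ∫ z : β × β, (C z.1 - C z.2) ∂(P.prod P) = 0 := by
    rw [integral_sub (h1.integrable (by norm_num)) (h2.integrable (by norm_num)), hm1, hm2, sub_self]
  have hs1 : ∫ z : β × β, (C z.1) ^ 2 ∂(P.prod P) = ∫ x, (C x) ^ 2 ∂P := by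
    rw [integral_fun_fst (fun x => C x ^ 2)]; simp
  have hs2 : ∫ z : β × β, (C z.2) ^ 2 ∂(P.prod P) = ∫ x, (C x) ^ 2 ∂P := by
    rw [integral_fun_snd (fun x => C x ^ 2)]; simp
  have hx : Integrable (fun z : β × β => C z.1 * C z.2) (P.prod P) := h1.integrable_mul h2
  have hDsq : ∫ z : β × β, (C z.1 - C z.2) ^ 2 ∂(P.prod P) = 2 * Var[C; P] := by
    have : (fun z : β × β => (C z.1 - C z.2) ^ 2)
        = fun z => (C z.1 ^ 2 + C z.2 ^ 2) - 2 * (C z.1 * C z.2) := by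
      funext z; ring
    have hadd : Integrable (fun z : β × β => C z.1 ^ 2 + C z.2 ^ 2) (P.prod P) :=
      h1.integrable_sq.add h2.integrable_sq
    rw [this, integral_sub hadd (hx.const_mul 2),
      integral_add h1.integrable_sq h2.integrable_sq, integral_const_mul, integral_prod_mul,
      hs1, hs2, variance_eq_sub hC]
    simp only [Pi.pow_apply]
    ring
  have hv := variance_nonneg (fun z : β × β => |C z.1 - C z.2|) (P.prod P)
  rw [variance_eq_sub hA] at hv
  simp only [Pi.pow_apply, sq_abs] at hv
  rw [hDsq] at hv
  have hle : ∫ z : β × β, |C z.1 - C z.2| ∂(P.prod P) ≤ Real.sqrt (2 * Var[C; P]) :=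
    Real.le_sqrt_of_sq_le (by linarith)
  rw [hE, integral_div, integral_add (hA.integrable (by norm_num)) hDi, hD0]
  linarith

open ProbabilityTheory in
lemma aux_count {α : Type*} [MeasurableSpace α] (μ : Measure α) [IsProbabilityMeasure μ]
    (n : ℕ) (s : Set α) (hs : MeasurableSet s) :
    MemLp (fun x : Fin n → α => (Nat.card {j : Fin n // x j ∈ s} : ℝ)) 2
      (Measure.pi fun _ => μ) ∧
    Var[fun x : Fin n → α => (Nat.card {j : Fin n // x j ∈ s} : ℝ); Measure.pi fun _ => μ]
      = n * (μ.real s - μ.real s ^ 2) := by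
  classical
  have hE : (fun x : Fin n → α => (Nat.card {j : Fin n // x j ∈ s} : ℝ))
      = ∑ j : Fin n, fun x : Fin n → α => s.indicator (fun _ => (1 : ℝ)) (x j) := by
    funext x
    rw [Finset.sum_apply, Nat.card_eq_fintype_card, Fintype.card_subtype]
    simp [Set.indicator_apply]
  have hL : MemLp (s.indicator (fun _ => (1 : ℝ))) 2 μ :=
    (memLp_const (1 : ℝ)).indicator hs
  rw [hE]
  constructor
  · exact memLp_finsetSum' _ fun j _ =>
      hL.comp_measurePreserving (measurePreserving_eval (fun _ : Fin n => μ) j)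
  · rw [variance_sum_pi (X := fun _ : Fin n => s.indicator (fun _ => (1 : ℝ))) (fun _ => hL),
      variance_eq_sub hL]
    have : (s.indicator (fun _ => (1 : ℝ))) ^ 2 = s.indicator (fun _ => (1 : ℝ)) := by
      funext x
      by_cases h : x ∈ s <;> simp [h]
    rw [this, integral_indicator hs]
    simp
    ring

/-- let `x₁,…,x_n` (robots) and `y₁,…,y_n` (targets) be `2n` mutually
independent uniform points in the unit square (modeled by the product measure on pairs of
configurations `ω = (x, y)`), and let `q₁,…,q_m` be pairwise disjoint measurable subsets of
the unit square covering it, each of Lebesgue measure `1/m`.  With `A_i = #{j : x_j ∈ q_i}`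
and `B_i = #{j : y_j ∈ q_i}`, the expected total number of robots left unmatched after a
maximal one-to-one robot–target matching within each region, namely
`E[Σ_i max(A_i − B_i, 0)]` (here `max(A_i − B_i, 0)` is the truncated subtraction
`A_i - B_i` in `ℕ`), is at most `sqrt(n·(m−1)/2)`. -/
theorem stmt_15 (n m : ℕ) (hm : 1 ≤ m) (q : Fin m → Set (EuclideanSpace ℝ (Fin 2)))
    (hmeas : ∀ i, MeasurableSet (q i))
    (hsub : ∀ i, q i ⊆ unitSquare)
    (hdisj : ∀ i j, i ≠ j → Disjoint (q i) (q j))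
    (hcover : unitSquare ⊆ ⋃ i, q i)
    (hvol : ∀ i, volume (q i) = 1 / (m : ENNReal)) :
    ∫ ω : (Fin n → EuclideanSpace ℝ (Fin 2)) × (Fin n → EuclideanSpace ℝ (Fin 2)),
        (∑ i : Fin m,
          ((Nat.card {j : Fin n // ω.1 j ∈ q i} - Nat.card {j : Fin n // ω.2 j ∈ q i} : ℕ) : ℝ))
        ∂((Measure.pi fun _ : Fin n => unifSquare).prod
            (Measure.pi fun _ : Fin n => unifSquare))
      ≤ Real.sqrt ((n : ℝ) * ((m : ℝ) - 1) / 2) := by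
  have hm0 : (m : ENNReal) ≠ 0 := by
    have : m ≠ 0 := by omega
    exact_mod_cast this
  have hU : unitSquare = ⋃ i, q i := Set.Subset.antisymm hcover (Set.iUnion_subset hsub)
  have hprob : IsProbabilityMeasure unifSquare := by
    constructor
    rw [unifSquare, Measure.restrict_apply_univ, hU,
      measure_iUnion (fun i j hij => hdisj i j hij) hmeas]
    simp only [hvol, tsum_fintype, Finset.sum_const, Finset.card_univ, Fintype.card_fin,
      nsmul_eq_mul]
    rw [one_div, ENNReal.mul_inv_cancel hm0 (ENNReal.natCast_ne_top m)]
  have hreal : ∀ i, unifSquare.real (q i) = 1 / (m : ℝ) := by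
    intro i
    rw [measureReal_def, unifSquare, Measure.restrict_apply (hmeas i),
      Set.inter_eq_left.mpr (hsub i), hvol]
    simp
  have hmR : (1 : ℝ) ≤ m := by exact_mod_cast hm
  have hkey := fun i => aux_pos_part (Measure.pi fun _ : Fin n => unifSquare) _
    (aux_count unifSquare n (q i) (hmeas i)).1
  have hcast : ∀ a b : ℕ, ((a - b : ℕ) : ℝ) = max ((a : ℝ) - b) 0 := by
    intro a b
    rcases le_total b a with h | h
    · rw [Nat.cast_sub h, max_eq_left (by simpa using h)]
    · rw [Nat.sub_eq_zero_of_le h, max_eq_right (by simpa using h), Nat.cast_zero]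
  simp only [hcast]
  rw [integral_finsetSum _ fun i _ => (hkey i).1]
  refine (Finset.sum_le_sum fun i _ => (hkey i).2).trans ?_
  simp only [(aux_count unifSquare n (q _) (hmeas _)).2, hreal, Finset.sum_const,
    Finset.card_univ, Fintype.card_fin, nsmul_eq_mul]
  apply Real.le_sqrt_of_sq_le
  have hnn : (0 : ℝ) ≤ 2 * (n * (1 / (m : ℝ) - (1 / (m : ℝ)) ^ 2)) := by
    have h1 : (1 : ℝ) / m ≤ 1 := by rw [div_le_one (by linarith)]; exact hmR
    have h0 : (0 : ℝ) ≤ 1 / m := by positivity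
    have : (0 : ℝ) ≤ 1 / (m : ℝ) - (1 / (m : ℝ)) ^ 2 := by nlinarith
    positivity
  rw [mul_pow, div_pow, Real.sq_sqrt hnn]
  have : (m : ℝ) ≠ 0 := by linarith
  apply le_of_eq
  field_simp
end
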